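/- arXiv:1704.08481 — 3 statements merged into one kernel-verified Lean document; each statement's English description precedes it below -/
import Mathlib

section
/- Let φ be an outmap that is an odd USO of the full face [∅,{1,…,n}] of the standard n-cube, and let W ⊆ {1,…,n} be a vertex satisfying φ(W) ∆ φ(W ∆ {i}) = {1,2,…,i} for all i ∈ {1,…,n}. Define the outmap φ' obtained by complementing W: φ'(W) = φ(W) ∆ {1,…,n}; φ'(W ∆ {i}) = φ(W ∆ {i}) ∆ {i} for each i ∈ {1,…,n}; and φ'(V) = φ(V) for all other vertices V. Then φ' is an odd USO of the full face [∅,{1,…,n}] as well. -/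
/-!
By the Szabó–Welzl criterion, `φ` is a USO iff for all distinct vertices `U, V` the set
`U ∆ V` meets `φ U ∆ φ V`. Hence being an odd USO is a condition on pairs of distinct vertices
(`GoodPair`), and only pairs containing `W` or a neighbour of `W` have to be inspected for `φ'`.

Pairs inside `{W} ∪ {W ∆ {i}}` are handled by direct computation. For a vertex `V` at distance at
least two from `W`, put `D = W ∆ V` and `X = φ W ∆ φ V`, so that `φ (W ∆ {j}) ∆ φ V = X ∆ {1,…,j}`.

* The pair `(W, V)`: it suffices that `D ⊈ X` (`not_subset_of_far`). If `D ⊆ X` and `j = max D`,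
  then `X ∆ {1,…,j}` misses `D`, so `φ` violates the criterion at `(W ∆ {j}, V)`.
* The pair `(W ∆ {i}, V)`: for `i ∈ D` nothing relevant changes. For `i ∉ D`, a violation
  prescribes `X` on `D` as `D ∩ {1,…,i-1}` or as its complement in `D`. If `D ∩ {1,…,i-1}` is
  empty this is impossible for `(W, V)`; otherwise, with `j` its maximum, the pair `(W ∆ {j}, V)`
  contradicts `φ` being an odd USO.
-/

open Finset
open scoped symmDiff

/-- `V` is a sink of the face `[A,B]` of the standard cube (vertices are subsets
of `{1,…,n}`) under the outmap `φ`: `V` belongs to the face and `φ V` has no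
coordinate in the carrier `B \ A`. -/
def IsSink (φ : Finset ℕ → Finset ℕ) (A B V : Finset ℕ) : Prop :=
  A ⊆ V ∧ V ⊆ B ∧ φ V ∩ (B \ A) = ∅

/-- The face `[A,B]` has exactly one sink under `φ`. -/
def HasUniqueSink (φ : Finset ℕ → Finset ℕ) (A B : Finset ℕ) : Prop :=
  ∃! V, IsSink φ A B V

/-- `φ` is a USO of the face `[A,B]`: every face contained in `[A,B]`
(including `[A,B]` itself) has exactly one sink under `φ`. -/
def IsUSO (φ : Finset ℕ → Finset ℕ) (A B : Finset ℕ) : Prop :=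
  A ⊆ B ∧ ∀ A' B' : Finset ℕ, A ⊆ A' → A' ⊆ B' → B' ⊆ B → HasUniqueSink φ A' B'

/-- `φ` is a PUSO of the face `[A,B]`: `[A,B]` does not have exactly one sink
under `φ`, but every proper face contained in `[A,B]` has exactly one sink. -/
def IsPUSO (φ : Finset ℕ → Finset ℕ) (A B : Finset ℕ) : Prop :=
  A ⊆ B ∧ ¬ HasUniqueSink φ A B ∧
    ∀ A' B' : Finset ℕ, A ⊆ A' → A' ⊆ B' → B' ⊆ B → ¬(A' = A ∧ B' = B) →
      HasUniqueSink φ A' B'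

/-- `φ` is an odd USO of the face `[A,B]`: it is a USO of `[A,B]` and for all
distinct vertices `U, V` of the face, `U ∆ V ⊆ φ U ∆ φ V` implies that
`|U ∆ V|` is odd. -/
def IsOddUSO (φ : Finset ℕ → Finset ℕ) (A B : Finset ℕ) : Prop :=
  IsUSO φ A B ∧
    ∀ U V : Finset ℕ, A ⊆ U → U ⊆ B → A ⊆ V → V ⊆ B → U ≠ V →
      U ∆ V ⊆ φ U ∆ φ V → Odd (U ∆ V).card

/-- The condition on a pair of vertices whose validity for all distinct pairs characterizes
odd USOs: `U ∆ V` meets `φ U ∆ φ V`, and is contained in it only if `|U ∆ V|` is odd. -/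
def GoodPair (φ : Finset ℕ → Finset ℕ) (U V : Finset ℕ) : Prop :=
  (∃ x ∈ U ∆ V, x ∈ φ U ∆ φ V) ∧ (U ∆ V ⊆ φ U ∆ φ V → Odd (U ∆ V).card)

lemma GoodPair.symm {φ : Finset ℕ → Finset ℕ} {U V : Finset ℕ} (h : GoodPair φ U V) :
    GoodPair φ V U := by
  unfold GoodPair at *
  rwa [symmDiff_comm V U, symmDiff_comm (φ V) (φ U)]

lemma isSink_iff {φ : Finset ℕ → Finset ℕ} {A B V : Finset ℕ} :
    IsSink φ A B V ↔ A ⊆ V ∧ V ⊆ B ∧ ∀ x ∈ B, x ∉ A → x ∉ φ V := by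
  unfold IsSink
  simp only [Finset.eq_empty_iff_forall_notMem, Finset.mem_inter, Finset.mem_sdiff]
  grind [Finset.mem_symmDiff]

/-- Reversing all edges in one direction `r` preserves USOs: in a face containing direction `r`,
the sinks of the two facets orthogonal to `r` exchange roles. -/
lemma IsUSO.flip {φ : Finset ℕ → Finset ℕ} {N : Finset ℕ} (h : IsUSO φ ∅ N) (r : ℕ) :
    IsUSO (fun V => φ V ∆ {r}) ∅ N := by
  refine ⟨h.1, fun A B hA hAB hB => ?_⟩
  by_cases hr : r ∈ B ∧ r ∉ A
  · obtain ⟨S, hS, hSu⟩ := h.2 A B hA hAB hB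
    obtain ⟨S0, hS0, hS0u⟩ := h.2 A (B.erase r) hA (by grind [Finset.mem_symmDiff]) (by grind)
    obtain ⟨S1, hS1, hS1u⟩ := h.2 (insert r A) B (by grind [Finset.mem_symmDiff]) (by grind) hB
    simp only [isSink_iff] at *
    by_cases hrS : r ∈ S
    · have e1 : S = S1 := hS1u S (by grind [Finset.mem_symmDiff])
      have hne : S0 ≠ S := by grind [Finset.mem_symmDiff]
      have hr0 : r ∈ φ S0 := by
        by_contra hc
        exact hne (hSu S0 (by grind [Finset.mem_symmDiff]))
      refine ⟨S0, isSink_iff.2 (by grind [Finset.mem_symmDiff]), fun T hT => ?_⟩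
      replace hT := isSink_iff.1 hT
      by_cases hrT : r ∈ T
      · have := hS1u T (by grind [Finset.mem_symmDiff])
        grind [Finset.mem_symmDiff]
      · exact hS0u T (by grind [Finset.mem_symmDiff])
    · have e1 : S = S0 := hS0u S (by grind [Finset.mem_symmDiff])
      have hne : S1 ≠ S := by grind [Finset.mem_symmDiff]
      have hr0 : r ∈ φ S1 := by
        by_contra hc
        exact hne (hSu S1 (by grind [Finset.mem_symmDiff]))
      refine ⟨S1, isSink_iff.2 (by grind [Finset.mem_symmDiff]), fun T hT => ?_⟩
      replace hT := isSink_iff.1 hT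
      by_cases hrT : r ∈ T
      · exact hS1u T (by grind [Finset.mem_symmDiff])
      · have := hS0u T (by grind [Finset.mem_symmDiff])
        grind [Finset.mem_symmDiff]
  · obtain ⟨S, hS, hSu⟩ := h.2 A B hA hAB hB
    simp only [isSink_iff] at *
    refine ⟨S, isSink_iff.2 (by grind [Finset.mem_symmDiff]), fun T hT => hSu T ?_⟩
    replace hT := isSink_iff.1 hT
    grind [Finset.mem_symmDiff]

lemma IsUSO.flips {φ : Finset ℕ → Finset ℕ} {N : Finset ℕ} (h : IsUSO φ ∅ N) (R : Finset ℕ) :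
    IsUSO (fun V => φ V ∆ R) ∅ N := by
  induction R using Finset.induction_on with
  | empty =>
    have e : (fun V => φ V ∆ ∅) = φ := funext fun V => symmDiff_bot (φ V)
    rwa [e]
  | insert r R hr ih =>
    convert ih.flip r using 2 with V
    grind [Finset.mem_symmDiff]

/-- The Szabó–Welzl criterion. -/
lemma isUSO_iff {φ : Finset ℕ → Finset ℕ} {N : Finset ℕ} :
    IsUSO φ ∅ N ↔ ∀ U V, U ⊆ N → V ⊆ N → U ≠ V → ∃ x ∈ U ∆ V, x ∈ φ U ∆ φ V := by
  constructor
  · intro h U V hU hV hne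
    by_contra! hc
    -- After flipping by `φ U`, both `U` and `V` are sinks of the face they span.
    obtain ⟨S, -, hSu⟩ := (h.flips (φ U)).2 (U ∩ V) (U ∪ V) (by simp) (by grind [Finset.mem_symmDiff]) (by grind)
    have h1 := hSu U (isSink_iff.2 (by grind [Finset.mem_symmDiff]))
    have h2 := hSu V (isSink_iff.2 (by grind [Finset.mem_symmDiff]))
    exact hne (h1.trans h2.symm)
  · intro h
    refine ⟨by simp, fun A B _ hAB hB => ?_⟩
    have hinj : Set.InjOn (fun V => φ V ∩ (B \ A)) (Finset.Icc A B : Finset (Finset ℕ)) := by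
      intro U hU V hV hUV
      simp only [Finset.coe_Icc, Set.mem_Icc] at hU hV
      by_contra hne
      obtain ⟨x, hx, hx'⟩ := h U V (hU.2.trans hB) (hV.2.trans hB) hne
      have := Finset.ext_iff.1 hUV x
      grind [Finset.mem_symmDiff]
    have hsurj := Finset.surjOn_of_injOn_of_card_le (s := Finset.Icc A B)
      (t := (B \ A).powerset) (fun V => φ V ∩ (B \ A))
      (fun V _ => by simp) hinj
      (by rw [Finset.card_Icc_finset hAB, Finset.card_powerset, Finset.card_sdiff_of_subset hAB])
    obtain ⟨S, hS, hS'⟩ := hsurj (show (∅ : Finset ℕ) ∈ _ by simp)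
    simp only [Finset.coe_Icc, Set.mem_Icc] at hS
    refine ⟨S, ⟨hS.1, hS.2, hS'⟩, fun T hT => ?_⟩
    exact hinj (by simpa using ⟨hT.1, hT.2.1⟩) (by simpa using hS) (hT.2.2.trans hS'.symm)

lemma isOddUSO_iff {φ : Finset ℕ → Finset ℕ} {N : Finset ℕ} :
    IsOddUSO φ ∅ N ↔ ∀ U V, U ⊆ N → V ⊆ N → U ≠ V → GoodPair φ U V := by
  unfold IsOddUSO GoodPair
  rw [isUSO_iff]
  simp only [Finset.empty_subset, true_imp_iff]
  exact ⟨fun h U V hU hV hne => ⟨h.1 U V hU hV hne, h.2 U V hU hV hne⟩,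
    fun h => ⟨fun U V hU hV hne => (h U V hU hV hne).1,
      fun U V hU hV hne => (h U V hU hV hne).2⟩⟩

section Complement

variable {n : ℕ} {φ : Finset ℕ → Finset ℕ} {W V : Finset ℕ}

/-- The pair `(W ∆ {j}, V)` of `φ` expressed through `D = W ∆ V` and `X = φ W ∆ φ V`,
for `j ∈ D`. -/
lemma goodPair_neighbor
    (hφ : ∀ U V, U ⊆ Finset.Icc 1 n → V ⊆ Finset.Icc 1 n → U ≠ V → GoodPair φ U V)
    (hW : W ⊆ Finset.Icc 1 n)
    (hWout : ∀ i ∈ Finset.Icc 1 n, φ W ∆ φ (W ∆ {i}) = Finset.Icc 1 i)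
    (hV : V ⊆ Finset.Icc 1 n) {j : ℕ} (hj : j ∈ W ∆ V) (hne : V ≠ W ∆ {j}) :
    (∃ x ∈ (W ∆ V).erase j, x ∈ (φ W ∆ φ V) ∆ Finset.Icc 1 j) ∧
      ((W ∆ V).erase j ⊆ (φ W ∆ φ V) ∆ Finset.Icc 1 j → Even (W ∆ V).card) := by
  have hjn : j ∈ Finset.Icc 1 n := by
    rcases Finset.mem_symmDiff.1 hj with h | h
    · exact hW h.1
    · exact hV h.1
  have h := hφ (W ∆ {j}) V (by grind [Finset.mem_symmDiff]) hV hne.symm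
  have e1 : (W ∆ {j}) ∆ V = (W ∆ V).erase j := by grind [Finset.mem_symmDiff]
  have e2 : φ (W ∆ {j}) ∆ φ V = (φ W ∆ φ V) ∆ Finset.Icc 1 j := by
    rw [← hWout j hjn]
    grind [Finset.mem_symmDiff]
  unfold GoodPair at h
  rw [e1, e2, Finset.card_erase_of_mem hj] at h
  refine ⟨h.1, fun hs => ?_⟩
  have h2 := h.2 hs
  have hpos : 0 < (W ∆ V).card := Finset.card_pos.2 ⟨j, hj⟩
  grind [Finset.mem_symmDiff]

lemma not_subset_of_far
    (hφ : ∀ U V, U ⊆ Finset.Icc 1 n → V ⊆ Finset.Icc 1 n → U ≠ V → GoodPair φ U V)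
    (hW : W ⊆ Finset.Icc 1 n)
    (hWout : ∀ i ∈ Finset.Icc 1 n, φ W ∆ φ (W ∆ {i}) = Finset.Icc 1 i)
    (hV : V ⊆ Finset.Icc 1 n) (hVW : V ≠ W)
    (hVn : ∀ i ∈ Finset.Icc 1 n, V ≠ W ∆ {i}) : ¬ W ∆ V ⊆ φ W ∆ φ V := by
  intro hs
  have hne : (W ∆ V).Nonempty := by
    rw [Finset.nonempty_iff_ne_empty]
    intro h
    exact hVW (symmDiff_eq_bot.1 h).symm
  have hDn : W ∆ V ⊆ Finset.Icc 1 n := by grind [Finset.mem_symmDiff]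
  have hj := Finset.max'_mem _ hne
  have hmax := Finset.le_max' (W ∆ V)
  set j := (W ∆ V).max' hne
  obtain ⟨x, hx, hx'⟩ := (goodPair_neighbor hφ hW hWout hV hj (hVn j (hDn hj))).1
  have hxD := Finset.mem_of_mem_erase hx
  have h1 := hmax x hxD
  have h2 := Finset.mem_Icc.1 (hDn hxD)
  have h3 := hs hxD
  have h4 : x ∈ Finset.Icc 1 j := Finset.mem_Icc.2 ⟨h2.1, h1⟩
  rw [Finset.mem_symmDiff] at hx'
  tauto

/-- The pair `(W ∆ {i}, V)` of `φ'` with `i ∉ D = W ∆ V`, where `X = φ W ∆ φ V`: on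
`D ∪ {i}` the relevant set is `X ∆ {1,…,i-1}`. -/
lemma goodPair_far
    (hφ : ∀ U V, U ⊆ Finset.Icc 1 n → V ⊆ Finset.Icc 1 n → U ≠ V → GoodPair φ U V)
    (hW : W ⊆ Finset.Icc 1 n)
    (hWout : ∀ i ∈ Finset.Icc 1 n, φ W ∆ φ (W ∆ {i}) = Finset.Icc 1 i)
    (hV : V ⊆ Finset.Icc 1 n) (hVW : V ≠ W)
    (hVn : ∀ i ∈ Finset.Icc 1 n, V ≠ W ∆ {i}) {i : ℕ} (hi : i ∉ W ∆ V) :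
    (∃ x ∈ insert i (W ∆ V), x ∈ (φ W ∆ φ V) ∆ Finset.Ico 1 i) ∧
      (insert i (W ∆ V) ⊆ (φ W ∆ φ V) ∆ Finset.Ico 1 i →
        Odd (insert i (W ∆ V)).card) := by
  have hDn : W ∆ V ⊆ Finset.Icc 1 n := by grind [Finset.mem_symmDiff]
  rw [Finset.card_insert_of_notMem hi]
  by_cases hne : ((W ∆ V).filter (· < i)).Nonempty
  · have hj := Finset.max'_mem _ hne
    have hmax := Finset.le_max' ((W ∆ V).filter (· < i))
    set j := ((W ∆ V).filter (· < i)).max' hne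
    rw [Finset.mem_filter] at hj
    obtain ⟨hg1, hg2⟩ := goodPair_neighbor hφ hW hWout hV hj.1 (hVn j (hDn hj.1))
    -- `{1,…,j}` and `{1,…,i-1}` agree on `D`.
    have key : ∀ x ∈ W ∆ V,
        (x ∈ (φ W ∆ φ V) ∆ Finset.Icc 1 j ↔ x ∈ (φ W ∆ φ V) ∆ Finset.Ico 1 i) := by
      intro x hx
      have : x ∈ Finset.Icc 1 j ↔ x ∈ Finset.Ico 1 i := by
        rw [Finset.mem_Icc, Finset.mem_Ico]
        refine ⟨fun h => ⟨h.1, h.2.trans_lt hj.2⟩, fun h => ⟨h.1, hmax x ?_⟩⟩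
        exact Finset.mem_filter.2 ⟨hx, h.2⟩
      simp only [Finset.mem_symmDiff (s := φ W ∆ φ V), this]
    constructor
    · obtain ⟨x, hx, hx'⟩ := hg1
      have hxD := Finset.mem_of_mem_erase hx
      exact ⟨x, Finset.mem_insert_of_mem hxD, (key x hxD).1 hx'⟩
    · intro hs
      refine (hg2 fun x hx => ?_).add_one
      have hxD := Finset.mem_of_mem_erase hx
      exact (key x hxD).2 (hs (Finset.mem_insert_of_mem hxD))
  · have key : ∀ x ∈ W ∆ V, (x ∈ φ W ∆ φ V ↔ x ∈ (φ W ∆ φ V) ∆ Finset.Ico 1 i) := by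
      intro x hx
      have : x ∉ Finset.Ico 1 i := fun h =>
        hne ⟨x, Finset.mem_filter.2 ⟨hx, (Finset.mem_Ico.1 h).2⟩⟩
      rw [Finset.mem_symmDiff (a := x) (s := φ W ∆ φ V)]
      tauto
    constructor
    · obtain ⟨x, hx, hx'⟩ := (hφ W V hW hV hVW.symm).1
      exact ⟨x, Finset.mem_insert_of_mem hx, (key x hx).1 hx'⟩
    · intro hs
      exact absurd (fun x hx => (key x hx).2 (hs (Finset.mem_insert_of_mem hx)))
        (not_subset_of_far hφ hW hWout hV hVW hVn)

end Complement

/-- Complementing a vertex `W` of an odd USO that satisfies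
`φ(W) ∆ φ(W ∆ {i}) = {1,…,i}` for all coordinates `i` yields again an odd USO. -/
theorem complement_vertex_odd_uso (n : ℕ) (φ φ' : Finset ℕ → Finset ℕ)
    (hφ : IsOddUSO φ ∅ (Finset.Icc 1 n))
    (W : Finset ℕ) (hW : W ⊆ Finset.Icc 1 n)
    (hWout : ∀ i ∈ Finset.Icc 1 n, φ W ∆ φ (W ∆ {i}) = Finset.Icc 1 i)
    (hφ'W : φ' W = φ W ∆ Finset.Icc 1 n)
    (hφ'nbr : ∀ i ∈ Finset.Icc 1 n, φ' (W ∆ {i}) = φ (W ∆ {i}) ∆ {i})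
    (hφ'other : ∀ V : Finset ℕ, V ≠ W → (∀ i ∈ Finset.Icc 1 n, V ≠ W ∆ {i}) →
      φ' V = φ V) :
    IsOddUSO φ' ∅ (Finset.Icc 1 n) := by
  rw [isOddUSO_iff] at hφ ⊢
  have hout : ∀ i ∈ Finset.Icc 1 n, φ (W ∆ {i}) = φ W ∆ Finset.Icc 1 i := by
    intro i hi
    rw [← hWout i hi, symmDiff_symmDiff_cancel_left]
  have center_nbr : ∀ i ∈ Finset.Icc 1 n, GoodPair φ' W (W ∆ {i}) := by
    intro i hi
    unfold GoodPair
    rw [hφ'W, hφ'nbr i hi, hout i hi, symmDiff_symmDiff_cancel_left]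
    refine ⟨⟨i, by simp, ?_⟩, fun _ => by simp⟩
    grind [Finset.mem_symmDiff]
  have nbr_nbr : ∀ i ∈ Finset.Icc 1 n, ∀ j ∈ Finset.Icc 1 n, i < j →
      GoodPair φ' (W ∆ {i}) (W ∆ {j}) := by
    intro i hi j hj hij
    have e1 : (W ∆ {i}) ∆ (W ∆ {j}) = {i, j} := by grind [Finset.mem_symmDiff]
    have e2 : φ' (W ∆ {i}) ∆ φ' (W ∆ {j}) = Finset.Ico i j := by
      rw [hφ'nbr i hi, hφ'nbr j hj, hout i hi, hout j hj]
      grind [Finset.mem_symmDiff]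
    unfold GoodPair
    rw [e1, e2]
    refine ⟨⟨i, by simp, by simpa using hij⟩, fun hs => ?_⟩
    have : j ∈ Finset.Ico i j := hs (by simp)
    simp at this
  have center_far : ∀ V, V ⊆ Finset.Icc 1 n → V ≠ W → (∀ i ∈ Finset.Icc 1 n, V ≠ W ∆ {i}) →
      GoodPair φ' W V := by
    intro V hV hVW hVn
    have hns := not_subset_of_far hφ hW hWout hV hVW hVn
    have hDn : W ∆ V ⊆ Finset.Icc 1 n := by grind [Finset.mem_symmDiff]
    unfold GoodPair
    rw [hφ'W, hφ'other V hVW hVn]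
    constructor
    · obtain ⟨x, hx, hx'⟩ := Finset.not_subset.1 hns
      exact ⟨x, hx, by have := hDn hx; grind [Finset.mem_symmDiff]⟩
    · intro hs
      obtain ⟨x, hx, hx'⟩ := (hφ W V hW hV hVW.symm).1
      have h1 := hDn hx
      have h2 := hs hx
      grind [Finset.mem_symmDiff]
  have nbr_far : ∀ i ∈ Finset.Icc 1 n, ∀ V, V ⊆ Finset.Icc 1 n → V ≠ W →
      (∀ i ∈ Finset.Icc 1 n, V ≠ W ∆ {i}) → GoodPair φ' (W ∆ {i}) V := by
    intro i hi V hV hVW hVn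
    unfold GoodPair
    rw [hφ'nbr i hi, hφ'other V hVW hVn]
    by_cases hiD : i ∈ W ∆ V
    · have hg := hφ (W ∆ {i}) V (by grind [Finset.mem_symmDiff]) hV (hVn i hi).symm
      have hiE : ∀ x ∈ (W ∆ {i}) ∆ V,
          (x ∈ φ (W ∆ {i}) ∆ φ V ↔ x ∈ (φ (W ∆ {i}) ∆ {i}) ∆ φ V) := by
        grind [Finset.mem_symmDiff]
      obtain ⟨⟨x, hx, hx'⟩, hodd⟩ := hg
      exact ⟨⟨x, hx, (hiE x hx).1 hx'⟩, fun hs => hodd fun x hx => (hiE x hx).2 (hs hx)⟩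
    · have e1 : (W ∆ {i}) ∆ V = insert i (W ∆ V) := by grind [Finset.mem_symmDiff]
      have e2 : (φ (W ∆ {i}) ∆ {i}) ∆ φ V = (φ W ∆ φ V) ∆ Finset.Ico 1 i := by
        have e3 : Finset.Icc 1 i ∆ {i} = Finset.Ico 1 i := by
          grind [Finset.mem_symmDiff]
        rw [hout i hi, symmDiff_assoc (φ W), e3, symmDiff_right_comm]
      rw [e1, e2]
      exact goodPair_far hφ hW hWout hV hVW hVn hiD
  have trichotomy : ∀ V : Finset ℕ, V = W ∨ (∃ i ∈ Finset.Icc 1 n, V = W ∆ {i}) ∨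
      (V ≠ W ∧ ∀ i ∈ Finset.Icc 1 n, V ≠ W ∆ {i}) := by
    intro V
    by_cases h1 : V = W
    · exact Or.inl h1
    · by_cases h2 : ∃ i ∈ Finset.Icc 1 n, V = W ∆ {i}
      · exact Or.inr (Or.inl h2)
      · push Not at h2
        exact Or.inr (Or.inr ⟨h1, h2⟩)
  intro U V hU hV hne
  rcases trichotomy U with rfl | ⟨i, hi, rfl⟩ | ⟨hUW, hUn⟩ <;>
    rcases trichotomy V with hVW | ⟨j, hj, rfl⟩ | ⟨hVW, hVn⟩
  · exact absurd hVW.symm hne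
  · exact center_nbr j hj
  · exact center_far V hV hVW hVn
  · rw [hVW]
    exact (center_nbr i hi).symm
  · rcases lt_trichotomy i j with h | h | h
    · exact nbr_nbr i hi j hj h
    · exact absurd (by rw [h]) hne
    · exact (nbr_nbr j hj i hi h).symm
  · exact nbr_far i hi V hV hVW hVn
  · rw [hVW]
    exact (center_far U hU hUW hUn).symm
  · exact (nbr_far j hj U hU hUW hUn).symm
  · have hg := hφ U V hU hV hne
    unfold GoodPair at hg ⊢
    rwa [hφ'other U hUW hUn, hφ'other V hVW hVn]
end

section
/- For every n ≥ 2, puso(n) ≤ 2^(2^(n−1)), where puso(n) is the number of outmaps φ mapping subsets of {1,…,n} to subsets of {1,…,n} that are PUSOs of the full face [∅,{1,…,n}] of the standard n-cube. -/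
/-!
Write `[k]` for `{1,…,k}` and let `φ` be a PUSO of the `n`-cube, `m = n - 1`.

*Structure of PUSOs.* Let `N(X)` be the number of vertices `V` of a face with carrier `C` such that
`φ V ∩ C = X`. Splitting the face along a coordinate `i ∉ X` gives
`N(X) + N(X ∪ {i}) = N₀(X) + N₁(X)`, where `N₀`, `N₁` count in the two facets
(`faceCount_split`). By induction `N = 1` throughout on every proper face of a PUSO, so two
non-antipodal vertices `U ≠ V` satisfy `(U ∆ V) ∩ (φ U ∆ φ V) ≠ ∅`. On the full cube the recursion
reads `N(X) + N(X ∪ {i}) = 2` with `N(∅) ≠ 1`, so `N` is `2` on one parity class and `0` on the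
other: all values of `φ` have the same parity, and antipodal vertices have the same value.

*Counting.* On the facet `[∅, [m]]` the map `U ↦ φ U ∩ [m]` is a bijection; let `ψ` be its
inverse. The facts above force the following about `ψ`: along an edge in direction `i`, membership
of `i` in `ψ` flips; for `X` and `X ∆ {i, j}`, exactly one of the memberships of `i` and `j` flips.
Hence, once the memberships of all `j < i` are known everywhere, the membership of `i` in `ψ X` can
be transported to a set with minimum `i` by removing the elements below `i` one at a time
(`inverse_determined`). So `ψ` is determined by the `2 ^ m - 1` bits `min S ∈ ψ S`, for `S ⊆ [m]`
nonempty, and `φ` is determined by `ψ` and the common parity: `2 ^ m` bits in total.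
-/

open Finset
open scoped symmDiff

/-- The set of outmaps of the standard `n`-cube (normalized: mapping subsets of
`{1,…,n}` to subsets of `{1,…,n}` and `∅` elsewhere) that are PUSOs of the full
face `[∅,{1,…,n}]`. -/
def PUSOOutmaps (n : ℕ) : Set (Finset ℕ → Finset ℕ) :=
  {φ | (∀ V : Finset ℕ, V ⊆ Finset.Icc 1 n → φ V ⊆ Finset.Icc 1 n) ∧
       (∀ V : Finset ℕ, ¬ V ⊆ Finset.Icc 1 n → φ V = ∅) ∧
       IsPUSO φ ∅ (Finset.Icc 1 n)}

/-- `puso n`: the number of outmaps of the standard `n`-cube that are PUSOs of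
the full face. -/
noncomputable def pusoCount (n : ℕ) : ℕ := (PUSOOutmaps n).ncard

/-! ### Counting vertices of a face by outmap value -/

/-- The number of vertices of the face `[A,B]` whose outmap, restricted to the carrier, is `X`. -/
def faceCount (φ : Finset ℕ → Finset ℕ) (A B X : Finset ℕ) : ℕ :=
  #{V ∈ Finset.Icc A B | φ V ∩ (B \ A) = X}

lemma faceCount_empty {φ : Finset ℕ → Finset ℕ} {A B : Finset ℕ} :
    faceCount φ A B ∅ = 1 ↔ HasUniqueSink φ A B := by
  unfold faceCount HasUniqueSink IsSink
  rw [Finset.card_eq_one, Finset.singleton_iff_unique_mem]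
  simp only [Finset.mem_filter, Finset.mem_Icc, and_assoc]

/-- Both sides count the vertices of `[A,B]` whose outmap agrees with `X` on all coordinates of the
carrier but `i`; the left side splits them by the membership of `i` in the outmap, the right side by
the membership of `i` in the vertex. -/
lemma faceCount_split (φ : Finset ℕ → Finset ℕ) {A B X : Finset ℕ} {i : ℕ}
    (hiB : i ∈ B) (hiA : i ∉ A) (hiX : i ∉ X) :
    faceCount φ A B X + faceCount φ A B (insert i X) =
      faceCount φ A (B.erase i) X + faceCount φ (insert i A) B X := by
  have hl := Finset.card_filter_add_card_filter_not
    (s := {V ∈ Finset.Icc A B | φ V ∩ ((B \ A).erase i) = X}) (fun V => i ∉ φ V)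
  have hr := Finset.card_filter_add_card_filter_not
    (s := {V ∈ Finset.Icc A B | φ V ∩ ((B \ A).erase i) = X}) (fun V => i ∉ V)
  have h1 : faceCount φ A B X =
      #{V ∈ {V ∈ Finset.Icc A B | φ V ∩ ((B \ A).erase i) = X} | i ∉ φ V} := by
    unfold faceCount
    congr 1
    ext V
    simp only [Finset.mem_filter, Finset.mem_Icc, Finset.ext_iff]
    grind
  have h2 : faceCount φ A B (insert i X) =
      #{V ∈ {V ∈ Finset.Icc A B | φ V ∩ ((B \ A).erase i) = X} | ¬ i ∉ φ V} := by
    unfold faceCount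
    congr 1
    ext V
    simp only [Finset.mem_filter, Finset.mem_Icc, Finset.ext_iff, Finset.mem_inter,
      Finset.mem_sdiff, Finset.mem_erase, Finset.mem_insert]
    clear hl hr h1
    grind
  have h3 : faceCount φ A (B.erase i) X =
      #{V ∈ {V ∈ Finset.Icc A B | φ V ∩ ((B \ A).erase i) = X} | i ∉ V} := by
    unfold faceCount
    congr 1
    ext V
    simp only [Finset.mem_filter, Finset.mem_Icc, Finset.ext_iff,
      Finset.subset_iff]
    grind
  have h4 : faceCount φ (insert i A) B X =
      #{V ∈ {V ∈ Finset.Icc A B | φ V ∩ ((B \ A).erase i) = X} | ¬ i ∉ V} := by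
    unfold faceCount
    congr 1
    ext V
    simp only [Finset.mem_filter, Finset.mem_Icc, Finset.ext_iff,
      Finset.subset_iff]
    grind
  omega

lemma IsUSO.mono {φ : Finset ℕ → Finset ℕ} {A B A' B' : Finset ℕ} (h : IsUSO φ A B)
    (h1 : A ⊆ A') (h2 : A' ⊆ B') (h3 : B' ⊆ B) : IsUSO φ A' B' :=
  ⟨h2, fun _ _ k1 k2 k3 => h.2 _ _ (h1.trans k1) k2 (k3.trans h3)⟩

lemma IsPUSO.isUSO {φ : Finset ℕ → Finset ℕ} {A B A' B' : Finset ℕ} (h : IsPUSO φ A B)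
    (h1 : A ⊆ A') (h2 : A' ⊆ B') (h3 : B' ⊆ B) (hne : ¬(A' = A ∧ B' = B)) : IsUSO φ A' B' := by
  refine ⟨h2, fun C D k1 k2 k3 => h.2.2 _ _ (h1.trans k1) k2 (k3.trans h3) ?_⟩
  rintro ⟨rfl, rfl⟩
  exact hne ⟨k1.antisymm h1, h3.antisymm k3⟩

/-- On a USO face every outmap value is taken exactly once. -/
lemma IsUSO.faceCount_eq_one {φ : Finset ℕ → Finset ℕ} (X : Finset ℕ) :
    ∀ {A B : Finset ℕ}, IsUSO φ A B → X ⊆ B \ A → faceCount φ A B X = 1 := by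
  induction X using Finset.induction_on with
  | empty => exact fun h _ => faceCount_empty.2 (h.2 _ _ subset_rfl h.1 subset_rfl)
  | insert i X hiX ih =>
    intro A B h hX
    have hi : i ∈ B \ A := hX (Finset.mem_insert_self _ _)
    rw [Finset.mem_sdiff] at hi
    have hs := faceCount_split φ hi.1 hi.2 hiX
    have hXs : ∀ x ∈ X, x ∈ B ∧ x ∉ A := fun x hx =>
      Finset.mem_sdiff.1 (hX (Finset.mem_insert_of_mem hx))
    have hAB := h.1
    have e0 := ih h (by grind)
    have e1 := ih (h.mono (A' := A) (B' := B.erase i) subset_rfl (by grind) (by grind)) (by grind)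
    have e2 := ih (h.mono (A' := insert i A) (B' := B) (by grind) (by grind) subset_rfl) (by grind)
    omega

/-! ### Structure of PUSOs -/

lemma IsPUSO.exists_mem_symmDiff {φ : Finset ℕ → Finset ℕ} {B U V : Finset ℕ}
    (h : IsPUSO φ ∅ B) (hU : U ⊆ B) (hV : V ⊆ B) (hne : U ≠ V) (hanti : V ≠ B \ U) :
    ∃ i, ¬(i ∈ U ↔ i ∈ V) ∧ ¬(i ∈ φ U ↔ i ∈ φ V) := by
  by_contra! hcon
  -- The face spanned by `U` and `V` is proper and has carrier `U ∆ V`.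
  have huso : IsUSO φ (U ∩ V) (U ∪ V) := by
    refine h.isUSO (by simp) (by grind) (by grind) ?_
    rintro ⟨h1, h2⟩
    apply hanti
    ext x
    have h1' := Finset.ext_iff.1 h1 x
    have h2' := Finset.ext_iff.1 h2 x
    grind
  have hc := huso.faceCount_eq_one (φ U ∩ ((U ∪ V) \ (U ∩ V))) Finset.inter_subset_right
  unfold faceCount at hc
  refine hne (Finset.card_le_one.1 hc.le U ?_ V ?_)
  · simp
  · simp only [Finset.mem_filter, Finset.mem_Icc]
    refine ⟨⟨Finset.inter_subset_right, Finset.subset_union_right⟩, ?_⟩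
    ext x
    have := hcon x
    simp only [Finset.mem_inter, Finset.mem_sdiff, Finset.mem_union]
    grind

lemma IsPUSO.faceCount_add {φ : Finset ℕ → Finset ℕ} {B X : Finset ℕ} {i : ℕ}
    (h : IsPUSO φ ∅ B) (hi : i ∈ B) (hX : X ⊆ B) (hiX : i ∉ X) :
    faceCount φ ∅ B X + faceCount φ ∅ B (insert i X) = 2 := by
  rw [faceCount_split φ hi (by simp) hiX,
    (h.isUSO subset_rfl (by simp) (Finset.erase_subset i B)
      (by rintro ⟨-, h⟩; rw [← h] at hi; simp at hi)).faceCount_eq_one X (by grind),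
    (h.isUSO (A' := insert i ∅) (by simp) (by grind) subset_rfl
      (by simp)).faceCount_eq_one X (by grind)]

lemma IsPUSO.faceCount_eq {φ : Finset ℕ → Finset ℕ} {B : Finset ℕ} (h : IsPUSO φ ∅ B)
    (X : Finset ℕ) : X ⊆ B →
    (Even #X → faceCount φ ∅ B X = faceCount φ ∅ B ∅) ∧
    (¬ Even #X → faceCount φ ∅ B X + faceCount φ ∅ B ∅ = 2) := by
  induction X using Finset.induction_on with
  | empty => simp
  | insert i X hiX ih =>
    intro hX
    have hs := h.faceCount_add (hX (Finset.mem_insert_self _ _))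
      ((Finset.subset_insert _ _).trans hX) hiX
    have := ih ((Finset.subset_insert _ _).trans hX)
    rw [Finset.card_insert_of_notMem hiX, Nat.even_add_one]
    grind

lemma faceCount_pos {φ : Finset ℕ → Finset ℕ} {B V : Finset ℕ} (hV : V ⊆ B)
    (hφ : φ V ⊆ B) : 0 < faceCount φ ∅ B (φ V) := by
  unfold faceCount
  refine Finset.card_pos.2 ⟨V, ?_⟩
  simpa [hV] using hφ

lemma IsPUSO.even_card_iff {φ : Finset ℕ → Finset ℕ} {B U V : Finset ℕ} (h : IsPUSO φ ∅ B)
    (hφ : ∀ V ⊆ B, φ V ⊆ B) (hU : U ⊆ B) (hV : V ⊆ B) : Even #(φ U) ↔ Even #(φ V) := by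
  have h1 := faceCount_pos hU (hφ U hU)
  have h2 := faceCount_pos hV (hφ V hV)
  have h3 := h.faceCount_eq _ (hφ U hU)
  have h4 := h.faceCount_eq _ (hφ V hV)
  have h5 : faceCount φ ∅ B ∅ ≠ 1 := fun h' => h.2.1 (faceCount_empty.1 h')
  grind

lemma IsPUSO.compl {φ : Finset ℕ → Finset ℕ} {B V : Finset ℕ} (h : IsPUSO φ ∅ B)
    (hB : B.Nonempty) (hφ : ∀ V ⊆ B, φ V ⊆ B) (hV : V ⊆ B) : φ (B \ V) = φ V := by
  have h1 := faceCount_pos hV (hφ V hV)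
  have h3 := h.faceCount_eq _ (hφ V hV)
  have h5 : faceCount φ ∅ B ∅ ≠ 1 := fun h' => h.2.1 (faceCount_empty.1 h')
  obtain ⟨b, hb⟩ := hB
  have h6 := h.faceCount_add hb (Finset.empty_subset B) (Finset.notMem_empty b)
  have h7 : 1 < faceCount φ ∅ B (φ V) := by grind
  unfold faceCount at h7
  -- The second vertex with the value `φ V` can only be the antipode of `V`.
  obtain ⟨W, hW, hne⟩ := Finset.exists_mem_ne h7 V
  simp only [Finset.mem_filter, Finset.mem_Icc, Finset.sdiff_empty] at hW
  obtain ⟨⟨-, hWB⟩, hWV⟩ := hW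
  rw [Finset.inter_eq_left.2 (hφ W hWB)] at hWV
  by_cases hanti : W = B \ V
  · rw [← hanti, hWV]
  · obtain ⟨i, -, hi⟩ := h.exists_mem_symmDiff hV hWB hne.symm hanti
    rw [hWV] at hi
    exact absurd Iff.rfl hi

/-! ### The inverse of a PUSO on a facet -/

/-- `ψ` satisfies the two local rules obeyed by the inverse of a PUSO on a facet with carrier `M`:
membership of `i` flips along edges in direction `i`, and exactly one of the memberships of `i`, `j`
flips between antipodal vertices of a 2-face with directions `i`, `j`. -/
structure LocalRules (M : Finset ℕ) (ψ : Finset ℕ → Finset ℕ) : Prop where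
  edge : ∀ X ⊆ M, ∀ i ∈ M, ¬(i ∈ ψ X ↔ i ∈ ψ (X ∆ {i}))
  square : ∀ X ⊆ M, ∀ i ∈ M, ∀ j ∈ M, i ≠ j →
    ((i ∈ ψ X ↔ i ∈ ψ (X ∆ {i, j})) ↔ ¬(j ∈ ψ X ↔ j ∈ ψ (X ∆ {i, j})))

/-- The bits `min S ∈ ψ S` determine a map obeying the local rules. -/
lemma inverse_determined {M : Finset ℕ} {ψ ψ' : Finset ℕ → Finset ℕ}
    (h : LocalRules M ψ) (h' : LocalRules M ψ')
    (hmin : ∀ S ⊆ M, ∀ i ∈ S, (∀ j ∈ S, i ≤ j) → (i ∈ ψ S ↔ i ∈ ψ' S)) (i : ℕ) :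
    i ∈ M → ∀ X ⊆ M, (i ∈ ψ X ↔ i ∈ ψ' X) := by
  induction i using Nat.strong_induction_on with
  | _ i ih =>
  intro hi X
  -- Inner induction on the number of elements of `X` below `i`.
  induction hk : #{j ∈ X | j < i} using Nat.strong_induction_on generalizing X with
  | _ k ihk =>
  intro hX
  by_cases hlow : ∃ j ∈ X, j < i
  · obtain ⟨j, hjX, hji⟩ := hlow
    have hY : X ∆ {i, j} ⊆ M := by
      intro x hx
      simp only [Finset.mem_symmDiff, Finset.mem_insert, Finset.mem_singleton] at hx
      grind
    have hcard : #{l ∈ X ∆ {i, j} | l < i} < k := by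
      rw [← hk]
      refine Finset.card_lt_card (Finset.ssubset_iff_subset_ne.2 ⟨?_, fun he => ?_⟩)
      · intro x hx
        simp only [Finset.mem_filter, Finset.mem_symmDiff, Finset.mem_insert,
          Finset.mem_singleton] at hx ⊢
        grind
      · have := Finset.ext_iff.1 he j
        simp only [Finset.mem_filter, Finset.mem_symmDiff, Finset.mem_insert,
          Finset.mem_singleton] at this
        grind
    have e1 := ihk _ hcard _ rfl hY
    have e2 := ih j hji (hX hjX) X hX
    have e3 := ih j hji (hX hjX) _ hY
    have e4 := h.square X hX i hi j (hX hjX) hji.ne'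
    have e5 := h'.square X hX i hi j (hX hjX) hji.ne'
    rw [e1, e2, e3, ← e5] at e4
    clear * - e4
    tauto
  · push Not at hlow
    by_cases hiX : i ∈ X
    · exact hmin X hX i hiX hlow
    · have e1 := hmin (X ∆ {i})
        (by intro x hx; simp only [Finset.mem_symmDiff, Finset.mem_singleton] at hx; grind) i
        (by simp [Finset.mem_symmDiff, hiX])
        (by intro x hx; simp only [Finset.mem_symmDiff, Finset.mem_singleton] at hx; grind)
      have e2 := h.edge X hX i hi
      have e3 := h'.edge X hX i hi
      clear * - e1 e2 e3
      tauto

/-- A PUSO restricted to the facet opposite to direction `b` has an inverse, which obeys the local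
rules. -/
lemma IsPUSO.exists_inverse {φ : Finset ℕ → Finset ℕ} {B : Finset ℕ} {b : ℕ} (h : IsPUSO φ ∅ B)
    (hb : b ∈ B) (hφ : ∀ V ⊆ B, φ V ⊆ B) :
    ∃ ψ : Finset ℕ → Finset ℕ, LocalRules (B.erase b) ψ ∧
      (∀ X ⊆ B.erase b, ψ X ⊆ B.erase b ∧ φ (ψ X) ∩ B.erase b = X) ∧
      ∀ U ⊆ B.erase b, ψ (φ U ∩ B.erase b) = U := by
  have huso : IsUSO φ ∅ (B.erase b) := h.isUSO subset_rfl (by simp) (Finset.erase_subset b B)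
    (by rintro ⟨-, h⟩; rw [← h] at hb; simp at hb)
  have hex : ∀ X : Finset ℕ, ∃ U, X ⊆ B.erase b →
      U ⊆ B.erase b ∧ φ U ∩ B.erase b = X := by
    intro X
    by_cases hX : X ⊆ B.erase b
    · have hc := huso.faceCount_eq_one X (by simpa using hX)
      unfold faceCount at hc
      obtain ⟨U, hU⟩ := Finset.card_pos.1 (hc ▸ Nat.one_pos)
      simp only [Finset.mem_filter, Finset.mem_Icc, Finset.sdiff_empty] at hU
      exact ⟨U, fun _ => ⟨hU.1.2, hU.2⟩⟩
    · exact ⟨∅, fun h => absurd h hX⟩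
  choose ψ hψ using hex
  -- Distinct vertices of the facet differ in a common coordinate with their outmaps.
  have hkey : ∀ U ⊆ B.erase b, ∀ V ⊆ B.erase b, U ≠ V →
      ∃ i, ¬(i ∈ U ↔ i ∈ V) ∧ ¬(i ∈ φ U ↔ i ∈ φ V) := by
    intro U hU V hV hne
    refine h.exists_mem_symmDiff (hU.trans (Finset.erase_subset b B))
      (hV.trans (Finset.erase_subset b B)) hne ?_
    rintro rfl
    have hbV : b ∈ B \ U := by grind
    have := hV hbV
    simp at this
  have hkey' : ∀ X ⊆ B.erase b, ∀ Y ⊆ B.erase b, X ≠ Y →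
      ∃ i, ¬(i ∈ ψ X ↔ i ∈ ψ Y) ∧ ¬(i ∈ X ↔ i ∈ Y) := by
    intro X hX Y hY hne
    obtain ⟨i, hi, hi'⟩ := hkey _ (hψ X hX).1 _ (hψ Y hY).1 (by
      intro he
      apply hne
      rw [← (hψ X hX).2, he, (hψ Y hY).2])
    refine ⟨i, hi, ?_⟩
    have hiB : i ∈ B.erase b := by
      by_contra hiB
      exact hi ⟨fun hh => absurd ((hψ X hX).1 hh) hiB, fun hh => absurd ((hψ Y hY).1 hh) hiB⟩
    have e1 := Finset.ext_iff.1 (hψ X hX).2 i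
    have e2 := Finset.ext_iff.1 (hψ Y hY).2 i
    rw [Finset.mem_inter] at e1 e2
    clear * - hi' hiB e1 e2
    tauto
  refine ⟨ψ, ⟨?_, ?_⟩, hψ, ?_⟩
  · intro X hX i hi
    obtain ⟨l, hl, hl'⟩ := hkey' X hX (X ∆ {i})
      (by intro x hx; simp only [Finset.mem_symmDiff, Finset.mem_singleton] at hx; grind)
      (by
        intro he
        have := Finset.ext_iff.1 he i
        simp only [Finset.mem_symmDiff, Finset.mem_singleton] at this
        clear * - this
        tauto)
    have hli : l = i := by
      simp only [Finset.mem_symmDiff, Finset.mem_singleton] at hl'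
      clear * - hl'
      tauto
    exact hli ▸ hl
  · intro X hX i hi j hj hij
    have hY : X ∆ {i, j} ⊆ B.erase b := by
      intro x hx
      simp only [Finset.mem_symmDiff, Finset.mem_insert, Finset.mem_singleton] at hx
      grind
    obtain ⟨l, hl, hl'⟩ := hkey' X hX (X ∆ {i, j}) hY
      (by
        intro he
        have := Finset.ext_iff.1 he i
        simp only [Finset.mem_symmDiff, Finset.mem_insert, Finset.mem_singleton] at this
        clear * - this
        tauto)
    have hlij : l = i ∨ l = j := by
      simp only [Finset.mem_symmDiff, Finset.mem_insert, Finset.mem_singleton] at hl'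
      clear * - hl'
      tauto
    suffices hnot : ¬(¬(i ∈ ψ X ↔ i ∈ ψ (X ∆ {i, j})) ∧ ¬(j ∈ ψ X ↔ j ∈ ψ (X ∆ {i, j}))) by
      clear * - hnot hl hlij
      rcases hlij with rfl | rfl <;> tauto
    rintro ⟨hdi, hdj⟩
    -- If both memberships flip, then `ψ X` and the antipode of `ψ (X ∆ {i, j})` violate
    -- `exists_mem_symmDiff`, their outmaps differing exactly in `i` and `j` by parity.
    obtain ⟨hU, hUX⟩ := hψ X hX
    obtain ⟨hW, hWY⟩ := hψ _ hY
    set U := ψ X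
    set W := ψ (X ∆ {i, j})
    have hUB := hU.trans (Finset.erase_subset b B)
    have hWB := hW.trans (Finset.erase_subset b B)
    have hpar := h.even_card_iff hφ hUB hWB
    have hd : ∀ x, x ≠ b → (¬(x ∈ φ U ↔ x ∈ φ W) ↔ x = i ∨ x = j) := by
      intro x hxb
      have e1 := Finset.ext_iff.1 hUX x
      have e2 := Finset.ext_iff.1 hWY x
      have e3 : x ∈ φ U → x ∈ B := fun hx => hφ U hUB hx
      have e4 : x ∈ φ W → x ∈ B := fun hx => hφ W hWB hx
      have e5 := Finset.mem_of_mem_erase hi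
      have e6 := Finset.mem_of_mem_erase hj
      simp only [Finset.mem_inter, Finset.mem_symmDiff, Finset.mem_insert, Finset.mem_singleton,
        Finset.mem_erase] at e1 e2
      grind
    have hbb : b ∈ φ U ↔ b ∈ φ W := by
      by_contra hbb
      have hsd : φ U ∆ φ W = {b, i, j} := by
        ext x
        have := hd x
        simp only [Finset.mem_symmDiff, Finset.mem_insert, Finset.mem_singleton]
        grind
      have hc3 : #(φ U ∆ φ W) = 3 := by
        rw [hsd]
        exact Finset.card_eq_three.2 ⟨b, i, j, by grind, by grind, hij, rfl⟩
      have hc := Finset.card_union_of_disjoint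
        (show Disjoint (φ U \ φ W) (φ W \ φ U) from disjoint_sdiff_sdiff)
      have hc' : #(φ U \ φ W) + #(φ W \ φ U) = 3 := by
        rw [← hc, ← hc3]; rfl
      have hc1 := Finset.card_sdiff_add_card_inter (φ U) (φ W)
      have hc2 := Finset.card_sdiff_add_card_inter (φ W) (φ U)
      rw [Finset.inter_comm] at hc2
      rw [Nat.even_iff, Nat.even_iff] at hpar
      omega
    obtain ⟨x, hx, hx'⟩ := h.exists_mem_symmDiff hUB (Finset.sdiff_subset (s := B) (t := W))
      (by
        intro he
        have h1 : b ∈ U := by rw [he]; grind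
        have := hU h1
        simp at this)
      (by
        intro he
        have := Finset.ext_iff.1 he i
        grind)
    rw [h.compl ⟨b, hb⟩ hφ hWB] at hx'
    have hxb : x ≠ b := by rintro rfl; exact hx' hbb
    have hxB : x ∈ B := by
      by_contra hxB
      exact hx ⟨fun hh => absurd (hUB hh) hxB, fun hh => absurd (Finset.mem_sdiff.1 hh).1 hxB⟩
    rw [Finset.mem_sdiff] at hx
    have hxij := (hd x hxb).1 hx'
    clear * - hxij hx hxB hdi hdj
    rcases hxij with rfl | rfl <;> tauto
  · intro U hU
    by_contra hne
    obtain ⟨hV, hVU⟩ := hψ _ (Finset.inter_subset_right (s₁ := φ U) (s₂ := B.erase b))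
    obtain ⟨i, hi, hi'⟩ := hkey _ hV _ hU hne
    have hiB : i ∈ B.erase b := by
      by_contra hiB
      exact hi ⟨fun hh => absurd (hV hh) hiB, fun hh => absurd (hU hh) hiB⟩
    have e1 := Finset.ext_iff.1 hVU i
    simp only [Finset.mem_inter] at e1
    clear * - hi' hiB e1
    tauto

/-! ### The encoding -/

open Classical in
/-- The bits `min S ∈ ψ S` for nonempty `S ⊆ M`, where `ψ` inverts `φ` on the facet `[∅,M]`,
collected as the set of those `S` with bit `1`; the otherwise unused `S = ∅` records whether the
outmap values are odd. -/
noncomputable def pusoCode (M : Finset ℕ) (φ : Finset ℕ → Finset ℕ) : Finset (Finset ℕ) :=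
  {S ∈ M.powerset | (∃ U ⊆ M, φ U ∩ M = S ∧ ∃ i ∈ S, i ∈ U ∧ ∀ j ∈ S, i ≤ j) ∨
    (S = ∅ ∧ ¬ Even #(φ ∅))}

lemma pusoCode_bit {M S : Finset ℕ} {φ ψ : Finset ℕ → Finset ℕ} {i : ℕ}
    (hψ : ∀ X ⊆ M, ψ X ⊆ M ∧ φ (ψ X) ∩ M = X) (hinv : ∀ U ⊆ M, ψ (φ U ∩ M) = U)
    (hS : S ⊆ M) (hi : i ∈ S) (hmin : ∀ j ∈ S, i ≤ j) :
    S ∈ pusoCode M φ ↔ i ∈ ψ S := by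
  simp only [pusoCode, Finset.mem_filter, Finset.mem_powerset]
  constructor
  · rintro ⟨-, ⟨U, hU, hUS, k, hk, hkU, hkmin⟩ | ⟨rfl, -⟩⟩
    · have hki : k = i := le_antisymm (hkmin i hi) (hmin k hk)
      rw [← hUS, hinv U hU, ← hki]
      exact hkU
    · simp at hi
  · exact fun h => ⟨hS, Or.inl ⟨ψ S, (hψ S hS).1, (hψ S hS).2, i, hi, h, hmin⟩⟩

lemma pusoCode_parity {M : Finset ℕ} {φ : Finset ℕ → Finset ℕ} :
    ∅ ∈ pusoCode M φ ↔ ¬ Even #(φ ∅) := by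
  simp [pusoCode]

lemma pusoCode_injOn {n : ℕ} (hn : 2 ≤ n) :
    Set.InjOn (pusoCode ((Finset.Icc 1 n).erase n)) (PUSOOutmaps n) := by
  rintro φ ⟨hφ, hφ0, h⟩ φ' ⟨hφ', hφ0', h'⟩ hcode
  have hb : n ∈ Finset.Icc 1 n := Finset.mem_Icc.2 ⟨by omega, le_rfl⟩
  generalize Finset.Icc 1 n = B at *
  obtain ⟨ψ, hr, hψ, hinv⟩ := h.exists_inverse hb hφ
  obtain ⟨ψ', hr', hψ', hinv'⟩ := h'.exists_inverse hb hφ'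
  have hsub := Finset.erase_subset n B
  have hψψ : ∀ X ⊆ B.erase n, ψ X = ψ' X := by
    intro X hX
    ext i
    by_cases hi : i ∈ B.erase n
    · refine inverse_determined hr hr' (fun S hS k hk hmin => ?_) i hi X hX
      rw [← pusoCode_bit hψ hinv hS hk hmin, hcode, pusoCode_bit hψ' hinv' hS hk hmin]
    · exact ⟨fun hh => absurd ((hψ X hX).1 hh) hi, fun hh => absurd ((hψ' X hX).1 hh) hi⟩
  have hfacet : ∀ U ⊆ B.erase n, φ U = φ' U := by
    intro U hU
    have he : φ U ∩ B.erase n = φ' U ∩ B.erase n := by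
      have h1 := hψψ _ (Finset.inter_subset_right (s₁ := φ U) (s₂ := B.erase n))
      rw [hinv U hU] at h1
      have h2 := (hψ' _ (Finset.inter_subset_right (s₁ := φ U) (s₂ := B.erase n))).2
      rw [← h1] at h2
      exact h2.symm
    have hUB := hU.trans hsub
    have hpar : Even #(φ U) ↔ Even #(φ' U) := by
      have e1 := h.even_card_iff hφ hUB (Finset.empty_subset B)
      have e2 := h'.even_card_iff hφ' hUB (Finset.empty_subset B)
      have e3 := pusoCode_parity (M := B.erase n) (φ := φ)
      have e4 := pusoCode_parity (M := B.erase n) (φ := φ')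
      rw [hcode] at e3
      tauto
    -- Agreement off `n` and equal parity give agreement at `n`.
    have he' : (φ U).erase n = (φ' U).erase n := by
      ext x
      have h1 := Finset.ext_iff.1 he x
      have h2 : x ∈ φ U → x ∈ B := fun hx => hφ U hUB hx
      have h3 : x ∈ φ' U → x ∈ B := fun hx => hφ' U hUB hx
      simp only [Finset.mem_inter, Finset.mem_erase] at h1 ⊢
      tauto
    have hnn : n ∈ φ U ↔ n ∈ φ' U := by
      have hc := congrArg Finset.card he'
      rw [Finset.card_erase_eq_ite, Finset.card_erase_eq_ite] at hc
      have p1 : n ∈ φ U → 0 < #(φ U) := fun hh => Finset.card_pos.2 ⟨n, hh⟩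
      have p2 : n ∈ φ' U → 0 < #(φ' U) := fun hh => Finset.card_pos.2 ⟨n, hh⟩
      rw [Nat.even_iff, Nat.even_iff] at hpar
      by_cases q1 : n ∈ φ U <;> by_cases q2 : n ∈ φ' U <;> simp only [q1, q2, if_true, if_false,
        forall_const] at hc p1 p2 ⊢ <;> omega
    ext x
    by_cases hx : x = n
    · rw [hx]; exact hnn
    · have := Finset.ext_iff.1 he' x
      simpa [hx] using this
  funext V
  by_cases hV : V ⊆ B
  · by_cases hnV : n ∈ V
    · rw [← h.compl ⟨n, hb⟩ hφ hV, ← h'.compl ⟨n, hb⟩ hφ' hV]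
      exact hfacet _ (by grind)
    · exact hfacet V (by grind)
  · rw [hφ0' V hV, hφ0 V hV]

/-- Upper bound on the number of PUSOs: `puso(n) ≤ 2^(2^(n-1))` for `n ≥ 2`. -/
theorem puso_upper_bound (n : ℕ) (hn : 2 ≤ n) :
    pusoCount n ≤ 2 ^ 2 ^ (n - 1) := by
  have hcard : #((Finset.Icc 1 n).erase n).powerset.powerset = 2 ^ 2 ^ (n - 1) := by
    rw [Finset.card_powerset, Finset.card_powerset,
      Finset.card_erase_of_mem (Finset.mem_Icc.2 ⟨by omega, le_rfl⟩), Nat.card_Icc,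
      Nat.add_sub_cancel]
  rw [pusoCount, ← hcard, ← Set.ncard_coe_finset]
  refine Set.ncard_le_ncard_of_injOn (pusoCode ((Finset.Icc 1 n).erase n)) (fun φ _ => ?_)
    (pusoCode_injOn hn) (Finset.finite_toSet _)
  exact Finset.mem_coe.2 (Finset.mem_powerset.2 (Finset.filter_subset _ _))
end

section
/- For every n of the form n = 2^k with k ≥ 2, puso(n) ≥ 2^(2^(n−1−k)+1), where puso(n) is the number of outmaps φ mapping subsets of {1,…,n} to subsets of {1,…,n} that are PUSOs of the full face [∅,{1,…,n}] of the standard n-cube. (Equivalently, since n = 2^k, the lower bound is 2^(2^(n−1−log₂ n)+1).) -/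
/-!
An outmap `φ` with `φ V = φ Vᶜ` is a PUSO as soon as `φ U ∆ φ V` meets `U ∆ V` for all `U, V` that
are neither equal nor complementary (`isPUSO_of_meets`): the Szabó–Welzl argument gives every proper
face a unique sink, and the sinks of the whole cube come in complementary pairs.

The coordinates are identified with the elements of the group `G = (ℤ/2)^k`, arranged in one cycle
by a permutation `σ`. The basic example is `V ↦ ∂V = {i | i ∈ V xor σ i ∈ V}`. It is modified by
means of the Hamming syndrome `s(A) = ∑_{a ∈ A} a`. Let `t = s(∂V)`; the set `∂V ∆ {t}` is a word of
syndrome zero. Given a family `F` of such words, put `φ_F(V) = ∂(V ∆ {σ t})` if `∂V ∆ {t} ∈ F`, and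
`φ_F(V) = ∂V` otherwise. The modified outmap still has the required property (`meets_aux`): writing
`φ_F(U) = ∂U'` and `φ_F(V) = ∂V'`, the set `∂(U' ∆ V')` has equally many elements inside and outside
`U' ∆ V'`, at most two elements change sides when passing to `U ∆ V`, and the syndrome shows that
these changes never bring all of `∂(U' ∆ V')` to the same side.

The words `∂V ∆ {t}` number at least `2^n / (2n) = 2^(n-1-k)`, since such a word together with `t`
determines `V` up to complement. Different `F` give different outmaps, and adding a fixed coordinate
to all values (which changes their parity) doubles the number of outmaps.
-/

open Finset
open scoped symmDiff

/-! ### A sufficient condition for being a PUSO -/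

theorem isPUSO_of_meets (φ : Finset ℕ → Finset ℕ) (N : Finset ℕ) (hN : N.Nonempty)
    (hc : ∀ V, V ⊆ N → φ (N \ V) = φ V)
    (h : ∀ U V, U ⊆ N → V ⊆ N → U ≠ V → U ≠ N \ V → ((φ U ∆ φ V) ∩ (U ∆ V)).Nonempty) :
    IsPUSO φ ∅ N := by
  refine ⟨empty_subset _, ?_, ?_⟩
  · rintro ⟨V, ⟨-, hV, hs⟩, hu⟩
    have h1 : N \ V = V := hu _ ⟨empty_subset _, sdiff_subset, by rw [hc V hV]; exact hs⟩
    obtain ⟨x, hx⟩ := hN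
    have := congrArg (x ∈ ·) h1
    simp [hx] at this
  · intro A B _ hAB hBN hne
    have key : ∀ U V, A ⊆ U → U ⊆ B → A ⊆ V → V ⊆ B →
        φ U ∩ (B \ A) = φ V ∩ (B \ A) → U = V := by
      intro U V hAU hUB hAV hVB heq
      by_contra hUV
      by_cases hcomp : U = N \ V
      · apply hne
        subst hcomp
        constructor
        · refine eq_empty_of_forall_notMem fun x hx => ?_
          exact (mem_sdiff.1 (hAU hx)).2 (hAV hx)
        · refine hBN.antisymm fun x hx => ?_
          by_cases hxV : x ∈ V
          · exact hVB hxV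
          · exact hUB (mem_sdiff.2 ⟨hx, hxV⟩)
      · obtain ⟨x, hx⟩ := h U V (hUB.trans hBN) (hVB.trans hBN) hUV hcomp
        have := congrArg (x ∈ ·) heq
        have h1 := @hAU x
        have h2 := @hAV x
        have h3 := @hUB x
        have h4 := @hVB x
        simp only [mem_inter, mem_symmDiff, mem_sdiff, eq_iff_iff] at hx this
        clear h hc hne heq
        grind
    -- The injective map `V ↦ φ V ∩ (B \ A)` from the face to `𝒫 (B \ A)` is onto, by counting.
    have hsurj : Set.SurjOn (fun V => φ V ∩ (B \ A)) (Finset.Icc A B : Finset (Finset ℕ))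
        ((B \ A).powerset : Finset (Finset ℕ)) := by
      apply Finset.surjOn_of_injOn_of_card_le
      · intro V _
        simp
      · intro U hU V hV heq
        simp only [coe_Icc, Set.mem_Icc] at hU hV
        exact key U V hU.1 hU.2 hV.1 hV.2 heq
      · rw [Finset.card_Icc_finset hAB, card_powerset, card_sdiff_of_subset hAB]
    obtain ⟨V, hV, hVe⟩ := hsurj (show (∅ : Finset ℕ) ∈ _ by simp)
    simp only [coe_Icc, Set.mem_Icc] at hV
    refine ⟨V, ⟨hV.1, hV.2, hVe⟩, ?_⟩
    rintro U ⟨h1, h2, h3⟩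
    exact key U V h1 h2 hV.1 hV.2 (h3.trans hVe.symm)

/-! ### The modified cyclic outmaps -/

namespace CyclicPUSO

section
set_option linter.unusedSectionVars false
variable {G : Type*} [AddCommGroup G] [Fintype G] [DecidableEq G]

/-- The boundary of `V` with respect to `σ`: the `i` such that exactly one of `i`, `σ i` is
in `V`. -/
def bd (σ : Equiv.Perm G) (V : Finset G) : Finset G :=
  univ.filter fun i => ¬ (i ∈ V ↔ σ i ∈ V)

/-- The Hamming syndrome of `A`. -/
def syn (A : Finset G) : G := ∑ i, if i ∈ A then i else 0

/-- The word of syndrome zero obtained from `A` by toggling one element. -/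
def word (A : Finset G) : Finset G := A ∆ {syn A}

/-- The outmap attached to the family `F` of words. -/
def out (σ : Equiv.Perm G) (F : Finset (Finset G)) (V : Finset G) : Finset G :=
  if word (bd σ V) ∈ F then bd σ (V ∆ {σ (syn (bd σ V))}) else bd σ V

/-- The set, empty or a singleton, by which `V'` differs from `V` when `out σ F V = A` is written
as `bd σ V'`. -/
def corr (F : Finset (Finset G)) (A : Finset G) : Finset G :=
  if word A ∈ F then {syn A} else ∅

theorem mem_bd {σ : Equiv.Perm G} {V : Finset G} {i : G} :
    i ∈ bd σ V ↔ ¬ (i ∈ V ↔ σ i ∈ V) := by simp [bd]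

theorem bd_symmDiff (σ : Equiv.Perm G) (U V : Finset G) : bd σ (U ∆ V) = bd σ U ∆ bd σ V := by
  ext i
  simp only [mem_bd, mem_symmDiff]
  tauto

theorem bd_compl (σ : Equiv.Perm G) (V : Finset G) : bd σ Vᶜ = bd σ V := by
  ext i
  simp only [mem_bd, mem_compl]
  tauto

theorem bd_singleton (σ : Equiv.Perm G) (x : G) : bd σ {σ x} = {x} ∆ {σ x} := by
  ext i
  simp only [mem_bd, mem_symmDiff, mem_singleton, σ.injective.eq_iff]
  tauto

theorem syn_eq_sum (A : Finset G) : syn A = ∑ i ∈ A, i := by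
  simp [syn]

theorem syn_singleton (x : G) : syn {x} = x := by
  simp [syn_eq_sum]

theorem syn_symmDiff (h2 : ∀ x : G, x + x = 0) (A B : Finset G) :
    syn (A ∆ B) = syn A + syn B := by
  unfold syn
  rw [← sum_add_distrib]
  refine sum_congr rfl fun i _ => ?_
  by_cases hA : i ∈ A <;> by_cases hB : i ∈ B <;> simp [mem_symmDiff, hA, hB, h2]

/-- The boundary of `W` has as many elements in `W` as outside. -/
theorem card_bd (σ : Equiv.Perm G) (W : Finset G) :
    (bd σ W ∩ W).card = (bd σ W \ W).card := by
  have h1 : (univ.filter fun i => σ i ∈ W).card = W.card := by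
    have : (univ.filter fun i => σ i ∈ W) = W.map σ.symm.toEmbedding := by
      ext i
      simp
    rw [this, card_map]
  have h3 : bd σ W ∩ W = W \ (univ.filter fun i => σ i ∈ W) := by
    ext i
    simp only [mem_bd, mem_inter, mem_sdiff, mem_filter, mem_univ, true_and]
    tauto
  have h4 : bd σ W \ W = (univ.filter fun i => σ i ∈ W) \ W := by
    ext i
    simp only [mem_bd, mem_sdiff, mem_filter, mem_univ, true_and]
    tauto
  rw [h3, h4]
  exact card_sdiff_comm h1.symm

theorem even_card_bd (σ : Equiv.Perm G) (W : Finset G) : Even (bd σ W).card := by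
  rw [← card_inter_add_card_sdiff (bd σ W) W, card_bd]
  exact ⟨_, rfl⟩

theorem eq_of_add (h2 : ∀ x : G, x + x = 0) {a b : G} (h : a + b = 0) : a = b := by
  rw [← add_left_inj b, h, h2]

/-- The heart of the argument: the boundaries of `U'` and `V'` differ at a coordinate where the
vertices `U = U' ∆ corr F (bd σ U')` and `V = V' ∆ corr F (bd σ V')` differ. -/
theorem meets_aux (h2 : ∀ x : G, x + x = 0) (σ : Equiv.Perm G)
    (hσ : ∀ W : Finset G, (∀ i, i ∈ W ↔ σ i ∈ W) → W = ∅ ∨ W = univ)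
    (F : Finset (Finset G)) (U V U' V' : Finset G)
    (hU : U = U' ∆ corr F (bd σ U')) (hV : V = V' ∆ corr F (bd σ V'))
    (hne : U ≠ V) (hne' : U ≠ Vᶜ) : ∃ x ∈ bd σ U' ∆ bd σ V', x ∈ U ∆ V := by
  by_contra! hcon
  obtain ⟨A, hA⟩ : ∃ A, A = bd σ U' := ⟨_, rfl⟩
  obtain ⟨B, hB⟩ : ∃ B, B = bd σ V' := ⟨_, rfl⟩
  obtain ⟨W, hW⟩ : ∃ W, W = U' ∆ V' := ⟨_, rfl⟩
  rw [← hA] at hU hcon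
  rw [← hB] at hV hcon
  have hD : bd σ W = A ∆ B := by rw [hW, hA, hB, bd_symmDiff]
  have hsD : syn (A ∆ B) = syn A + syn B := syn_symmDiff h2 A B
  have hmem : ∀ x, x ∈ U ∆ V ↔ x ∈ W ∆ (corr F A ∆ corr F B) := by
    intro x
    rw [hU, hV, hW, symmDiff_symmDiff_symmDiff_comm]
  have hcA : ∀ x, x ∈ corr F A ↔ x = syn A ∧ word A ∈ F := by
    intro x
    unfold corr
    split_ifs with h <;> simp [h]
  have hcB : ∀ x, x ∈ corr F B ↔ x = syn B ∧ word B ∈ F := by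
    intro x
    unfold corr
    split_ifs with h <;> simp [h]
  obtain ⟨P, hP⟩ : ∃ P, P = bd σ W ∩ W := ⟨_, rfl⟩
  obtain ⟨Q, hQ⟩ : ∃ Q, Q = bd σ W \ W := ⟨_, rfl⟩
  have hPQ : P.card = Q.card := by rw [hP, hQ, card_bd]
  have hdis : Disjoint P Q := by
    rw [hP, hQ, Finset.disjoint_left]
    intro x hx hx'
    exact (mem_sdiff.1 hx').2 (mem_inter.1 hx).2
  have hun : A ∆ B = P ∪ Q := by
    rw [← hD]
    ext x
    simp only [hP, hQ, mem_union, mem_inter, mem_sdiff]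
    tauto
  have hsum : syn A + syn B = ∑ i ∈ P, i + ∑ i ∈ Q, i := by
    rw [← hsD, syn_eq_sum, hun, sum_union hdis]
  have hPm : ∀ x ∈ P, ¬ (x ∈ corr F A ↔ x ∈ corr F B) := by
    intro x hx
    have h1 := hcon x (by rw [hun]; exact mem_union_left _ hx)
    rw [hmem] at h1
    have h3 := (mem_inter.1 (hP ▸ hx)).2
    simp only [mem_symmDiff] at h1
    tauto
  have hQm : ∀ x ∈ Q, (x ∈ corr F A ↔ x ∈ corr F B) := by
    intro x hx
    have h1 := hcon x (by rw [hun]; exact mem_union_right _ hx)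
    rw [hmem] at h1
    have h3 := (mem_sdiff.1 (hQ ▸ hx)).2
    simp only [mem_symmDiff] at h1
    tauto
  have hsub : P ⊆ {syn A, syn B} := by
    intro x hx
    have := hPm x hx
    rw [hcA, hcB] at this
    simp only [mem_insert, mem_singleton]
    tauto
  have hle : P.card ≤ 2 := (card_le_card hsub).trans card_le_two
  -- A one-element `P = {a}`, `Q = {b}` makes `A` and `B` share their word.
  have hword : ∀ a b, A ∆ B = {a} ∪ {b} → a ≠ b → syn A = a → syn B = b → word A = word B := by
    intro a b hab hne ha hb
    ext x
    have h1 := congrArg (x ∈ ·) hab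
    simp only [mem_symmDiff, mem_union, mem_singleton, eq_iff_iff] at h1
    simp only [word, ha, hb, mem_symmDiff, mem_singleton]
    by_cases hxa : x = a
    · have : x ≠ b := hxa ▸ hne
      tauto
    · tauto
  obtain h0 | h1 | h22 : P.card = 0 ∨ P.card = 1 ∨ P.card = 2 := by omega
  · have hP0 : P = ∅ := card_eq_zero.1 h0
    have hQ0 : Q = ∅ := card_eq_zero.1 (hPQ ▸ h0)
    rw [hP0, hQ0, empty_union] at hun
    have hAB : A = B := symmDiff_eq_bot.1 hun
    have hUV : U ∆ V = W := by
      ext x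
      rw [hmem, hAB, symmDiff_self, symmDiff_bot]
    have hinv : ∀ i, i ∈ W ↔ σ i ∈ W := by
      intro i
      by_contra hi
      have := mem_bd.2 hi
      rw [hD, hun] at this
      simp at this
    rcases hσ W hinv with h | h
    · rw [h] at hUV
      exact hne (symmDiff_eq_bot.1 hUV)
    · rw [h] at hUV
      apply hne'
      ext x
      have := congrArg (x ∈ ·) hUV
      simp only [mem_symmDiff, mem_univ, eq_iff_iff, iff_true] at this
      rw [mem_compl]
      tauto
  · obtain ⟨a, ha⟩ := card_eq_one.1 h1
    obtain ⟨b, hb⟩ := card_eq_one.1 (hPQ ▸ h1)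
    rw [ha, hb, sum_singleton, sum_singleton] at hsum
    have hab : a ≠ b := by
      rw [ha, hb] at hdis
      simpa using hdis
    rw [ha, hb] at hun
    have h3 := hPm a (by simp [ha])
    have h4 := hQm b (by simp [hb])
    rw [hcA, hcB] at h3 h4
    have h5 : a = syn A ∨ a = syn B := by tauto
    rcases h5 with h5 | h5
    · have h6 : syn B = b := by rw [h5] at hsum; exact add_left_cancel hsum
      have h7 := hword a b hun hab h5.symm h6
      rw [h7, ← h5, h6] at h3 h4
      tauto
    · have h6 : syn A = b := by
        rw [h5, add_comm] at hsum
        exact add_left_cancel hsum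
      have h7 := hword b a (by rw [hun, union_comm]) hab.symm h6 h5.symm
      rw [h7, ← h5, h6] at h3 h4
      tauto
  -- With `P = {syn A, syn B}` the two elements of `Q` would have sum zero.
  · have hPe : P = {syn A, syn B} := eq_of_subset_of_card_le hsub (by rw [h22]; exact card_le_two)
    have hnAB : syn A ≠ syn B := by
      intro h
      rw [hPe, h] at h22
      simp at h22
    obtain ⟨c, d, hcd, hQe⟩ := card_eq_two.1 (hPQ ▸ h22)
    rw [hPe, hQe, sum_pair hnAB, sum_pair hcd] at hsum
    exact hcd (eq_of_add h2 (by simpa using hsum))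

theorem exists_lift (h2 : ∀ x : G, x + x = 0) (σ : Equiv.Perm G) (F : Finset (Finset G))
    (V : Finset G) : ∃ V', out σ F V = bd σ V' ∧ V = V' ∆ corr F (bd σ V') := by
  unfold out
  split_ifs with h
  · refine ⟨_, rfl, ?_⟩
    have h1 : bd σ (V ∆ {σ (syn (bd σ V))})
        = bd σ V ∆ ({syn (bd σ V)} ∆ {σ (syn (bd σ V))}) := by
      rw [bd_symmDiff, bd_singleton]
    have h3 : syn (bd σ (V ∆ {σ (syn (bd σ V))})) = σ (syn (bd σ V)) := by
      rw [h1, syn_symmDiff h2, syn_symmDiff h2, syn_singleton, syn_singleton, ← add_assoc, h2,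
        zero_add]
    have h4 : word (bd σ (V ∆ {σ (syn (bd σ V))})) = word (bd σ V) := by
      unfold word
      rw [h3, h1, ← symmDiff_assoc, symmDiff_symmDiff_cancel_right]
    unfold corr
    rw [h4, if_pos h, h3, symmDiff_symmDiff_cancel_right]
  · exact ⟨V, rfl, by rw [corr, if_neg h, ← bot_eq_empty, symmDiff_bot]⟩

theorem out_compl (σ : Equiv.Perm G) (F : Finset (Finset G)) (V : Finset G) :
    out σ F Vᶜ = out σ F V := by
  have : ∀ T : Finset G, Vᶜ ∆ T = (V ∆ T)ᶜ := by
    intro T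
    ext x
    simp only [mem_symmDiff, mem_compl]
    tauto
  unfold out
  rw [bd_compl, this, bd_compl]

theorem out_meets (h2 : ∀ x : G, x + x = 0) (σ : Equiv.Perm G)
    (hσ : ∀ W : Finset G, (∀ i, i ∈ W ↔ σ i ∈ W) → W = ∅ ∨ W = univ)
    (F : Finset (Finset G)) (U V : Finset G) (hne : U ≠ V) (hne' : U ≠ Vᶜ) :
    ∃ x ∈ out σ F U ∆ out σ F V, x ∈ U ∆ V := by
  obtain ⟨U', h1, h3⟩ := exists_lift h2 σ F U
  obtain ⟨V', h4, h5⟩ := exists_lift h2 σ F V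
  rw [h1, h4]
  exact meets_aux h2 σ hσ F U V U' V' h3 h5 hne hne'

theorem even_card_out (σ : Equiv.Perm G) (F : Finset (Finset G)) (V : Finset G) :
    Even (out σ F V).card := by
  unfold out
  split_ifs <;> exact even_card_bd _ _

/-- Toggling one element changes the parity of the cardinality. -/
theorem ne_symmDiff_singleton {A B : Finset G} (x : G) (hA : Even A.card) (hB : Even B.card) :
    A ≠ B ∆ {x} := by
  intro h
  by_cases hx : x ∈ B
  · have h1 : B ∆ {x} = B.erase x := by grind [mem_symmDiff]
    have h3 := card_erase_add_one hx
    rw [← h1, ← h] at h3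
    grind
  · have h1 : B ∆ {x} = insert x B := by grind [mem_symmDiff]
    have h3 := card_insert_of_notMem hx
    rw [← h1, ← h] at h3
    grind

/-- The words that occur for the vertices of the cube. -/
def words (σ : Equiv.Perm G) : Finset (Finset G) := univ.image fun V => word (bd σ V)

theorem card_words (σ : Equiv.Perm G)
    (hσ : ∀ W : Finset G, (∀ i, i ∈ W ↔ σ i ∈ W) → W = ∅ ∨ W = univ) :
    2 ^ Fintype.card G ≤ (words σ).card * (Fintype.card G * 2) := by
  have hinj : Function.Injective fun V : Finset G =>
      ((⟨word (bd σ V), mem_image_of_mem _ (mem_univ V)⟩ : words σ),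
        syn (bd σ V), decide ((0 : G) ∈ V)) := by
    intro U V h
    simp only [Prod.mk.injEq, decide_eq_decide] at h
    obtain ⟨h1', h3, h4⟩ := h
    have h1 : word (bd σ U) = word (bd σ V) := congrArg Subtype.val h1'
    have h5 : bd σ U = bd σ V := by
      unfold word at h1
      rw [h3] at h1
      exact symmDiff_left_injective _ h1
    have hinv : ∀ i, i ∈ U ∆ V ↔ σ i ∈ U ∆ V := by
      intro i
      have := congrArg (i ∈ ·) h5
      simp only [mem_bd, eq_iff_iff] at this
      simp only [mem_symmDiff]
      tauto
    rcases hσ _ hinv with h | h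
    · exact symmDiff_eq_bot.1 h
    · have := mem_univ (0 : G)
      rw [← h, mem_symmDiff] at this
      tauto
  simpa using Fintype.card_le_of_injective _ hinj

/-- Distinct families of words give distinct outmaps. -/
theorem out_injOn (σ : Equiv.Perm G) (hfix : ∀ x, σ x ≠ x) {F F' : Finset (Finset G)}
    (hF : F ⊆ words σ) (hF' : F' ⊆ words σ) (h : ∀ V, out σ F V = out σ F' V) : F = F' := by
  have hmem : ∀ V, word (bd σ V) ∈ F ↔ word (bd σ V) ∈ F' := by
    intro V
    have hne : bd σ (V ∆ {σ (syn (bd σ V))}) ≠ bd σ V := by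
      rw [bd_symmDiff, bd_singleton]
      intro h
      have h1 := symmDiff_eq_left.1 h
      have h3 := symmDiff_eq_bot.1 h1
      exact hfix _ (singleton_injective h3).symm
    have := h V
    unfold out at this
    split_ifs at this with h1 h3 h3
    · tauto
    · exact absurd this hne
    · exact absurd this.symm hne
    · tauto
  ext C
  constructor
  · intro hC
    obtain ⟨V, -, rfl⟩ := mem_image.1 (hF hC)
    exact (hmem V).1 hC
  · intro hC
    obtain ⟨V, -, rfl⟩ := mem_image.1 (hF' hC)
    exact (hmem V).2 hC

/-- A cyclic arrangement of a finite set with at least two elements. -/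
theorem exists_cycle (G : Type*) [Fintype G] (m : ℕ) (hm : Fintype.card G = m + 2) :
    ∃ σ : Equiv.Perm G, (∀ x, σ x ≠ x) ∧
      ∀ W : Finset G, (∀ i, i ∈ W ↔ σ i ∈ W) → W = ∅ ∨ W = univ := by
  obtain e := Fintype.equivFinOfCardEq hm
  refine ⟨(e.trans (Equiv.addRight 1)).trans e.symm, ?_, ?_⟩
  · intro x h
    simp [Equiv.symm_apply_eq] at h
  · intro W hW
    have hstep : ∀ j : Fin (m + 2), e.symm j ∈ W ↔ e.symm (j + 1) ∈ W := by
      intro j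
      simpa using hW (e.symm j)
    have hall : ∀ j : Fin (m + 2), e.symm j ∈ W ↔ e.symm 0 ∈ W := by
      intro j
      induction j using Fin.induction with
      | zero => rfl
      | succ i ih => rw [← ih, hstep i.castSucc, Fin.coeSucc_eq_succ]
    by_cases h0 : e.symm 0 ∈ W
    · right
      ext x
      simpa using (hall (e x)).2 h0
    · left
      ext x
      simpa using fun hx => h0 ((hall (e x)).1 (by simpa using hx))

/-! ### Transport to the standard cube -/

/-- The outmap of the standard cube with coordinate set `ι(G)` that corresponds to `out σ F`, with
the coordinates in `T` reversed, where `p = (F, T)`. It is `∅` outside the cube. -/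
def outNat (ι : G ↪ ℕ) (σ : Equiv.Perm G) (p : Finset (Finset G) × Finset G) (V : Finset ℕ) :
    Finset ℕ :=
  if V ⊆ univ.map ι then (out σ p.1 (univ.filter fun i => ι i ∈ V) ∆ p.2).map ι else ∅

theorem outNat_map (ι : G ↪ ℕ) (σ : Equiv.Perm G) (p : Finset (Finset G) × Finset G)
    (V : Finset G) : outNat ι σ p (V.map ι) = (out σ p.1 V ∆ p.2).map ι := by
  unfold outNat
  rw [if_pos (map_subset_map.2 (subset_univ _))]
  congr 3
  ext i
  simp

theorem outNat_mem (h2 : ∀ x : G, x + x = 0) (σ : Equiv.Perm G)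
    (hσ : ∀ W : Finset G, (∀ i, i ∈ W ↔ σ i ∈ W) → W = ∅ ∨ W = univ) (n : ℕ) (ι : G ↪ ℕ)
    (hι : univ.map ι = Finset.Icc 1 n) (p : Finset (Finset G) × Finset G) :
    outNat ι σ p ∈ PUSOOutmaps n := by
  have hlift : ∀ V, V ⊆ univ.map ι → ∃ V' : Finset G, V = V'.map ι := by
    intro V hV
    obtain ⟨V', -, h⟩ := subset_map_iff.1 hV
    exact ⟨V', h⟩
  refine ⟨?_, ?_, ?_⟩
  · rw [← hι]
    intro V hV
    obtain ⟨V', rfl⟩ := hlift V hV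
    rw [outNat_map]
    exact map_subset_map.2 (subset_univ _)
  · rw [← hι]
    intro V hV
    exact if_neg hV
  · rw [← hι]
    have hcompl : ∀ V : Finset G, univ.map ι \ V.map ι = Vᶜ.map ι := by
      intro V
      ext x
      simp only [mem_sdiff, mem_map, mem_univ, true_and, mem_compl]
      constructor
      · rintro ⟨⟨a, rfl⟩, h⟩
        exact ⟨a, fun ha => h ⟨a, ha, rfl⟩, rfl⟩
      · rintro ⟨a, ha, rfl⟩
        exact ⟨⟨a, rfl⟩, by simpa using ha⟩
    apply isPUSO_of_meets
    · exact ⟨ι 0, mem_map_of_mem _ (mem_univ _)⟩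
    · intro V hV
      obtain ⟨V', rfl⟩ := hlift V hV
      rw [hcompl, outNat_map, outNat_map, out_compl]
    · intro U V hU hV hne hne'
      obtain ⟨U', rfl⟩ := hlift U hU
      obtain ⟨V', rfl⟩ := hlift V hV
      rw [hcompl] at hne'
      obtain ⟨x, hx, hx'⟩ := out_meets h2 σ hσ p.1 U' V' (fun h => hne (by rw [h]))
        (fun h => hne' (by rw [h]))
      refine ⟨ι x, ?_⟩
      simp only [outNat_map, mem_inter, mem_symmDiff, mem_map'] at hx hx' ⊢
      clear hne hne' hU hV
      grind

end

end CyclicPUSO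

theorem finite_PUSOOutmaps (n : ℕ) : (PUSOOutmaps n).Finite := by
  let r : (Finset ℕ → Finset ℕ) →
      ((Finset.Icc 1 n).powerset → (Finset.Icc 1 n).powerset) :=
    fun φ V => ⟨φ V ∩ Finset.Icc 1 n, mem_powerset.2 inter_subset_right⟩
  refine Set.Finite.of_finite_image (f := r) (Set.toFinite _) ?_
  rintro φ ⟨h1, h2, -⟩ ψ ⟨h3, h4, -⟩ h
  funext V
  by_cases hV : V ⊆ Finset.Icc 1 n
  · have := congrArg Subtype.val (congrFun h ⟨V, mem_powerset.2 hV⟩)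
    simpa only [r, inter_eq_left.2 (h1 V hV), inter_eq_left.2 (h3 V hV)] using this
  · rw [h2 V hV, h4 V hV]

open CyclicPUSO in
/-- Lower bound on the number of PUSOs: for `n = 2^k` with `k ≥ 2`,
`puso(n) ≥ 2^(2^(n-1-k)+1)` (note `k = log₂ n`). -/
theorem puso_lower_bound (n k : ℕ) (hk : 2 ≤ k) (hn : n = 2 ^ k) :
    2 ^ (2 ^ (n - 1 - k) + 1) ≤ pusoCount n := by
  have hkn : k + 1 ≤ n := hn ▸ Nat.lt_two_pow_self
  have hcard : Fintype.card (Fin k → ZMod 2) = n := by simp [hn, ZMod.card]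
  have h2 : ∀ x : Fin k → ZMod 2, x + x = 0 := fun x =>
    funext fun i => CharTwo.add_self_eq_zero (x i)
  obtain ⟨σ, hfix, hσ⟩ := exists_cycle (Fin k → ZMod 2) (n - 2) (by omega)
  obtain ⟨ι, hι⟩ : ∃ ι : (Fin k → ZMod 2) ↪ ℕ, univ.map ι = Finset.Icc 1 n := by
    have e : (Fin k → ZMod 2) ≃ Finset.Icc 1 n :=
      Fintype.equivOfCardEq (by rw [hcard]; simp)
    refine ⟨e.toEmbedding.trans (Function.Embedding.subtype _), ?_⟩
    rw [← map_map, map_univ_equiv]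
    exact attach_map_val
  have hwords : 2 ^ (n - 1 - k) ≤ (words σ).card := by
    have h := card_words σ hσ
    rw [hcard] at h
    have h3 : 2 ^ n = 2 ^ (n - 1 - k) * (n * 2) := by
      conv_rhs => rw [hn, ← pow_succ, ← hn, ← pow_add]
      congr 1
      omega
    rw [h3] at h
    exact Nat.le_of_mul_le_mul_right h (by omega)
  let S : Finset (Finset (Finset (Fin k → ZMod 2)) × Finset (Fin k → ZMod 2)) :=
    (words σ).powerset ×ˢ {∅, {0}}
  have hS : 2 ^ (2 ^ (n - 1 - k) + 1) ≤ S.card := by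
    rw [card_product, card_powerset, card_pair (by simp), pow_succ]
    gcongr
    norm_num
  refine hS.trans ?_
  unfold pusoCount
  rw [← Set.ncard_coe_finset S]
  refine Set.ncard_le_ncard_of_injOn (outNat ι σ) (fun p _ => outNat_mem h2 σ hσ n ι hι p) ?_
    (finite_PUSOOutmaps n)
  rintro ⟨F, T⟩ hp ⟨F', T'⟩ hp' h
  simp only [S, coe_product, Set.mem_prod, mem_coe, mem_powerset, mem_insert, mem_singleton]
    at hp hp'
  have hV : ∀ V, out σ F V ∆ T = out σ F' V ∆ T' := by
    intro V
    have := congrFun h (V.map ι)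
    rwa [outNat_map, outNat_map, map_inj] at this
  have hT : T = T' := by
    have h3 := hV ∅
    have h4 := even_card_out σ F ∅
    have h5 := even_card_out σ F' ∅
    rcases hp.2 with rfl | rfl <;> rcases hp'.2 with rfl | rfl
    · rfl
    · rw [← bot_eq_empty, symmDiff_bot] at h3
      exact absurd h3 (ne_symmDiff_singleton 0 h4 h5)
    · rw [← bot_eq_empty, symmDiff_bot] at h3
      exact absurd h3.symm (ne_symmDiff_singleton 0 h5 h4)
    · rfl
  subst hT
  have hF : F = F' := out_injOn σ hfix hp.1 hp'.1 fun V => symmDiff_left_injective _ (hV V)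
  rw [hF]
end
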